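/- Iterated Lie bracket estimate: Let F and V be analytic vector fields on 𝕋ⁿ, 0 < σ < r, λ > 0, and define V₀ = V, V_n = [V_{n−1}, F] for n ≥ 1. Then for every n ≥ 1, ‖V_n‖_{r−σ} ≤ (n/(eσ))ⁿ e^{1/λ} ‖V‖_r ‖F‖_{r+λσ}ⁿ. -/

import Mathlib

/-!
Writing out the brackets, `(V_m)_l` is bounded by the sum over `k₀ + ⋯ + k_m = l` of
`‖V_{k₀}‖ ‖F_{k₁}‖ ⋯ ‖F_{k_m}‖ S₁ ⋯ S_m`, where `S_j = |k₀| + ⋯ + |k_j|`: one bracket with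
the frequency `k_j` costs a factor `|k₀ + ⋯ + k_{j-1}| + |k_j| ≤ S_j`. Since `S_j ≤ S_m` and
`S ^ m e^{-Sσ} ≤ (m / (eσ)) ^ m` for `S ≥ 0`, this gives
`‖V_m‖_{r-σ} ≤ (m / (eσ)) ^ m ‖V‖_r ‖F‖_r ^ m`, which is stronger than the claim because
`e^{1/λ} ≥ 1` and `‖F‖_r ≤ ‖F‖_{r+λσ}`.

Instead of multi-indexed sums, the proof is an induction on `m` over all monotone weights `w`
(`wsum_lieIter_le`): one bracket replaces the weight `w` by the weights
`x ↦ (x + a) w (x + a)`, `a = |k|`, summed over `k` against `‖F_k‖` (`wsum_lieCoeff_le`).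
All sums are taken in `ℝ≥0∞`, where convergence is no issue.
-/

open scoped BigOperators
noncomputable section

/-- The sum-norm `|k| = Σᵢ |kᵢ|` of an integer vector `k ∈ ℤⁿ`. -/
def znorm {n : ℕ} (k : Fin n → ℤ) : ℝ := ∑ i, |(k i : ℝ)|

/-- The weighted norm `‖P‖ₛ = Σ_k ‖p_k‖ e^{|k| s}` of a vector field on the torus
given by its Fourier coefficients `p : ℤⁿ → ℂⁿ` (max-norm on `ℂⁿ`). -/
def wnorm {n : ℕ} (p : (Fin n → ℤ) → (Fin n → ℂ)) (s : ℝ) : ℝ :=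
  ∑' k, ‖p k‖ * Real.exp (znorm k * s)

/-- Fourier coefficients of the directional derivative `DU·V`:
`(DU·V)_l = Σ_k i u_k ⟨k, v_{l−k}⟩`. -/
def dirDeriv {n : ℕ} (u v : (Fin n → ℤ) → (Fin n → ℂ)) : (Fin n → ℤ) → (Fin n → ℂ) :=
  fun l => ∑' k, (Complex.I * ∑ i, (k i : ℂ) * v (l - k) i) • u k

/-- Fourier coefficients of the Lie bracket `[U,V] = DV·U − DU·V`. -/
def lieCoeff {n : ℕ} (u v : (Fin n → ℤ) → (Fin n → ℂ)) : (Fin n → ℤ) → (Fin n → ℂ) :=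
  fun l => dirDeriv v u l - dirDeriv u v l

/-- Iterated Lie brackets: `V₀ = V`, `V_{m+1} = [V_m, F]`. -/
def lieIter {n : ℕ} (v f : (Fin n → ℤ) → (Fin n → ℂ)) : ℕ → (Fin n → ℤ) → (Fin n → ℂ)
  | 0 => v
  | m + 1 => lieCoeff (lieIter v f m) f

open scoped ENNReal

lemma znorm_nonneg {n : ℕ} (k : Fin n → ℤ) : 0 ≤ znorm k :=
  Finset.sum_nonneg fun _ _ => abs_nonneg _

lemma znorm_add_le {n : ℕ} (k l : Fin n → ℤ) : znorm (k + l) ≤ znorm k + znorm l := by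
  unfold znorm
  rw [← Finset.sum_add_distrib]
  refine Finset.sum_le_sum fun i _ => ?_
  simpa using abs_add_le (k i : ℝ) (l i)

/-- The weighted sum `Σ_k ‖u_k‖ w(|k|)` with values in `[0, ∞]`, for a general weight `w`. -/
def wsum {n : ℕ} (u : (Fin n → ℤ) → (Fin n → ℂ)) (w : ℝ → ℝ≥0∞) : ℝ≥0∞ :=
  ∑' k, ‖u k‖ₑ * w (znorm k)

/-- The exponential weight `x ↦ e^{xs}`. -/
def expWeight (s : ℝ) : ℝ → ℝ≥0∞ := fun x => ENNReal.ofReal (Real.exp (x * s))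

lemma wnorm_eq_toReal {n : ℕ} (p : (Fin n → ℤ) → (Fin n → ℂ)) (s : ℝ) :
    wnorm p s = (wsum p (expWeight s)).toReal := by
  unfold wnorm wsum expWeight
  rw [ENNReal.tsum_toReal_eq fun k => ENNReal.mul_ne_top enorm_ne_top ENNReal.ofReal_ne_top]
  simp [ENNReal.toReal_ofReal (Real.exp_pos _).le]

lemma wsum_ne_top {n : ℕ} {p : (Fin n → ℤ) → (Fin n → ℂ)} {s : ℝ}
    (h : Summable fun k => ‖p k‖ * Real.exp (znorm k * s)) :
    wsum p (expWeight s) ≠ ∞ := by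
  convert h.tsum_ofReal_ne_top using 1
  refine tsum_congr fun k => ?_
  rw [ENNReal.ofReal_mul (norm_nonneg _), ofReal_norm]
  rfl

/-- The bound `|⟨k, v⟩| ≤ |k| ‖v‖`, dual sum-norm against max-norm, for one term of `dirDeriv`. -/
lemma enorm_symbol_le {n : ℕ} (k : Fin n → ℤ) (v u : Fin n → ℂ) :
    ‖(Complex.I * ∑ i, (k i : ℂ) * v i) • u‖ₑ ≤ ENNReal.ofReal (znorm k) * ‖v‖ₑ * ‖u‖ₑ := by
  have h : ‖(Complex.I * ∑ i, (k i : ℂ) * v i) • u‖ ≤ znorm k * ‖v‖ * ‖u‖ := by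
    rw [norm_smul, norm_mul, Complex.norm_I, one_mul]
    gcongr
    refine (norm_sum_le _ _).trans ?_
    unfold znorm
    rw [Finset.sum_mul]
    refine Finset.sum_le_sum fun i _ => ?_
    rw [norm_mul, Complex.norm_intCast]
    gcongr
    exact norm_le_pi_norm v i
  have := ENNReal.ofReal_le_ofReal h
  rwa [ENNReal.ofReal_mul (by have := znorm_nonneg k; positivity),
    ENNReal.ofReal_mul (znorm_nonneg k), ofReal_norm, ofReal_norm, ofReal_norm] at this

lemma enorm_dirDeriv_le {n : ℕ} (u v : (Fin n → ℤ) → (Fin n → ℂ)) (l : Fin n → ℤ) :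
    ‖dirDeriv u v l‖ₑ ≤ ∑' k, ENNReal.ofReal (znorm k) * ‖v (l - k)‖ₑ * ‖u k‖ₑ :=
  enorm_tsum_le_tsum_enorm.trans (ENNReal.tsum_le_tsum fun _ => enorm_symbol_le _ _ _)

lemma enorm_lieCoeff_le {n : ℕ} (u f : (Fin n → ℤ) → (Fin n → ℂ)) (l : Fin n → ℤ) :
    ‖lieCoeff u f l‖ₑ ≤
      ∑' k, ‖f k‖ₑ * (‖u (l - k)‖ₑ * ENNReal.ofReal (znorm (l - k) + znorm k)) := by
  have h2 := enorm_dirDeriv_le u f l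
  rw [← (Equiv.subLeft l).tsum_eq] at h2
  refine (enorm_sub_le.trans (add_le_add (enorm_dirDeriv_le f u l) h2)).trans_eq ?_
  rw [← ENNReal.tsum_add]
  refine tsum_congr fun k => ?_
  rw [ENNReal.ofReal_add (znorm_nonneg _) (znorm_nonneg _)]
  simp only [Equiv.subLeft_apply, sub_sub_cancel]
  ring

/-- Bracketing with `f` trades the weight `w` for the shifted weights `x ↦ (x + |k|) w (x + |k|)`,
summed over `k` against `‖f_k‖`; monotonicity of `w` enters through `|l + k| ≤ |l| + |k|`. -/
lemma wsum_lieCoeff_le {n : ℕ} (u f : (Fin n → ℤ) → (Fin n → ℂ)) {w : ℝ → ℝ≥0∞}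
    (hw : Monotone w) :
    wsum (lieCoeff u f) w ≤
      ∑' k, ‖f k‖ₑ *
        wsum u (fun x => ENNReal.ofReal (x + znorm k) * w (x + znorm k)) := by
  calc wsum (lieCoeff u f) w
      ≤ ∑' l, ∑' k, ‖f k‖ₑ *
          (‖u (l - k)‖ₑ * ENNReal.ofReal (znorm (l - k) + znorm k)) * w (znorm l) := by
        refine ENNReal.tsum_le_tsum fun l => ?_
        rw [ENNReal.tsum_mul_right]
        gcongr
        exact enorm_lieCoeff_le u f l
    _ = ∑' k, ∑' l, ‖f k‖ₑ *
          (‖u (l - k)‖ₑ * ENNReal.ofReal (znorm (l - k) + znorm k)) * w (znorm l) :=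
        ENNReal.tsum_comm
    _ ≤ _ := by
        refine ENNReal.tsum_le_tsum fun k => ?_
        rw [← (Equiv.addRight k).tsum_eq, wsum, ← ENNReal.tsum_mul_left]
        refine ENNReal.tsum_le_tsum fun l => ?_
        simp only [Equiv.coe_addRight, add_sub_cancel_right]
        rw [mul_assoc, mul_assoc]
        gcongr
        exact hw (znorm_add_le l k)

/-- The iterated estimate for an arbitrary monotone weight `w`: it only matters how `x ^ m w(x)`
compares with `e^{xr}`. -/
lemma wsum_lieIter_le {n : ℕ} (V F : (Fin n → ℤ) → (Fin n → ℂ)) (r : ℝ) (m : ℕ) :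
    ∀ (w : ℝ → ℝ≥0∞) (C : ℝ≥0∞), Monotone w →
      (∀ x, 0 ≤ x → ENNReal.ofReal x ^ m * w x ≤ C * expWeight r x) →
      wsum (lieIter V F m) w ≤ C * wsum V (expWeight r) * wsum F (expWeight r) ^ m := by
  induction m with
  | zero =>
    intro w C _ h
    rw [pow_zero, mul_one, wsum, wsum, ← ENNReal.tsum_mul_left]
    refine ENNReal.tsum_le_tsum fun k => ?_
    have := h _ (znorm_nonneg k)
    rw [pow_zero, one_mul] at this
    calc _ ≤ ‖V k‖ₑ * (C * expWeight r (znorm k)) := by gcongr; rfl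
      _ = _ := by ring
  | succ m ih =>
    intro w C hw h
    calc wsum (lieIter V F (m + 1)) w
        ≤ ∑' k, ‖F k‖ₑ * wsum (lieIter V F m)
            (fun x => ENNReal.ofReal (x + znorm k) * w (x + znorm k)) :=
          wsum_lieCoeff_le _ F hw
      _ ≤ ∑' k, ‖F k‖ₑ * ((C * expWeight r (znorm k)) * wsum V (expWeight r) *
            wsum F (expWeight r) ^ m) := by
          refine ENNReal.tsum_le_tsum fun k => ?_
          gcongr
          refine ih _ _ ?_ ?_
          · intro x y hxy
            dsimp only
            gcongr
            exact hw (by gcongr)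
          · intro x hx
            have hk := znorm_nonneg k
            calc _ ≤ ENNReal.ofReal (x + znorm k) ^ m *
                    (ENNReal.ofReal (x + znorm k) * w (x + znorm k)) := by
                  gcongr
                  linarith
              _ = ENNReal.ofReal (x + znorm k) ^ (m + 1) * w (x + znorm k) := by ring
              _ ≤ C * expWeight r (x + znorm k) := h _ (by positivity)
              _ = _ := by
                  unfold expWeight
                  rw [add_mul, Real.exp_add, ENNReal.ofReal_mul (Real.exp_pos _).le]
                  ring
      _ = C * wsum V (expWeight r) * wsum F (expWeight r) ^ (m + 1) := by
          calc _ = ∑' k, ‖F k‖ₑ * expWeight r (znorm k) *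
                (C * wsum V (expWeight r) * wsum F (expWeight r) ^ m) :=
                tsum_congr fun k => by ring
            _ = wsum F (expWeight r) *
                (C * wsum V (expWeight r) * wsum F (expWeight r) ^ m) :=
                ENNReal.tsum_mul_right
            _ = _ := by ring

/-- The maximum of `x ^ m e^{-xσ}` over `x ≥ 0` is attained at `x = m / σ`. -/
lemma pow_mul_exp_le {x σ : ℝ} (r : ℝ) (hx : 0 ≤ x) (hσ : 0 < σ) {m : ℕ} (hm : 1 ≤ m) :
    x ^ m * Real.exp (x * (r - σ)) ≤ (m / (Real.exp 1 * σ)) ^ m * Real.exp (x * r) := by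
  have hm' : (0 : ℝ) < m := by exact_mod_cast hm
  -- `t ≤ e^{t-1}` at `t = xσ/m`
  have h1 : x ≤ m / (Real.exp 1 * σ) * Real.exp (x * σ / m) := by
    have h := Real.add_one_le_exp (x * σ / m - 1)
    rw [sub_add_cancel, Real.exp_sub] at h
    calc x = m / σ * (x * σ / m) := by field_simp
      _ ≤ m / σ * (Real.exp (x * σ / m) / Real.exp 1) := by gcongr
      _ = _ := by field_simp
  calc x ^ m * Real.exp (x * (r - σ))
      ≤ (m / (Real.exp 1 * σ) * Real.exp (x * σ / m)) ^ m * Real.exp (x * (r - σ)) := by gcongr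
    _ = (m / (Real.exp 1 * σ)) ^ m * Real.exp (x * r) := by
      rw [mul_pow, ← Real.exp_nat_mul, mul_assoc, ← Real.exp_add]
      congr 2
      field_simp
      ring

/-- **Iterated Lie bracket estimate.**
With `V₀ = V` and `V_m = [V_{m−1}, F]`, for every `m ≥ 1`,
`‖V_m‖_{r−σ} ≤ (m/(eσ))^m e^{1/λ} ‖V‖_r ‖F‖_{r+λσ}^m`. -/
theorem iterated_lie_bracket_estimate {n : ℕ}
    (V F : (Fin n → ℤ) → (Fin n → ℂ)) (r σ lam : ℝ)
    (hσ0 : 0 < σ) (hσr : σ < r) (hlam : 0 < lam)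
    (hV : Summable fun k => ‖V k‖ * Real.exp (znorm k * r))
    (hF : Summable fun k => ‖F k‖ * Real.exp (znorm k * (r + lam * σ))) :
    ∀ m : ℕ, 1 ≤ m →
      wnorm (lieIter V F m) (r - σ) ≤
        (m / (Real.exp 1 * σ)) ^ m * Real.exp (1 / lam) * wnorm V r *
          wnorm F (r + lam * σ) ^ m := by
  intro m hm
  have hmono : wsum F (expWeight r) ≤ wsum F (expWeight (r + lam * σ)) := by
    refine ENNReal.tsum_le_tsum fun k => ?_
    unfold expWeight
    have := znorm_nonneg k
    have : 0 < lam * σ := by positivity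
    gcongr
    linarith
  have key := wsum_lieIter_le V F r m (expWeight (r - σ))
    (ENNReal.ofReal ((m / (Real.exp 1 * σ)) ^ m)) ?_ ?_
  · rw [wnorm_eq_toReal, wnorm_eq_toReal, wnorm_eq_toReal]
    have hC : (0 : ℝ) ≤ (m / (Real.exp 1 * σ)) ^ m := by positivity
    have h2 : wsum (lieIter V F m) (expWeight (r - σ)) ≤
        ENNReal.ofReal ((m / (Real.exp 1 * σ)) ^ m) * wsum V (expWeight r) *
          wsum F (expWeight (r + lam * σ)) ^ m := key.trans (by gcongr)
    have h3 := ENNReal.toReal_mono (ENNReal.mul_ne_top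
      (ENNReal.mul_ne_top ENNReal.ofReal_ne_top (wsum_ne_top hV))
      (ENNReal.pow_ne_top (wsum_ne_top hF))) h2
    rw [ENNReal.toReal_mul, ENNReal.toReal_mul, ENNReal.toReal_pow,
      ENNReal.toReal_ofReal hC] at h3
    refine h3.trans ?_
    gcongr
    exact le_mul_of_one_le_right hC (Real.one_le_exp (by positivity))
  · intro x y hxy
    have : 0 < r - σ := by linarith
    unfold expWeight
    gcongr
  · intro x hx
    unfold expWeight
    rw [← ENNReal.ofReal_pow hx, ← ENNReal.ofReal_mul (by positivity),
      ← ENNReal.ofReal_mul (by positivity)]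
    exact ENNReal.ofReal_le_ofReal (pow_mul_exp_le r hx hσ0 hm)
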